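/- Let G=(V,E,σ) be a finite weighted graph, let Γ be a nonempty family of walks on G, and let 1 < p < ∞. For each q with 1 < q < ∞, let ρ_q denote the unique extremal density for Mod_q(Γ). Then ρ_q → ρ_p as q → p; i.e. lim_{q→p} ‖ρ_p − ρ_q‖ = 0 in the Euclidean norm on ℝ^E (equivalently in any norm, since E is finite). -/

import Mathlib

/-!
The extremal densities `ρ_q` stay in a compact box as `q → p`: comparing with the fixed competitor
`ρ_p` gives `σ(e) ρ_q(e)^q ≤ ℰ_q(ρ_q) ≤ ℰ_q(ρ_p)`, and the right side converges to `ℰ_p(ρ_p)`.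
Any cluster point `y` is admissible because the admissible set is closed, and passing to the limit
in `ℰ_q(ρ_q) ≤ ℰ_q(ρ_p)` gives `ℰ_p(y) ≤ ℰ_p(ρ_p)`, so `y` is extremal for `p`. Strict convexity of
`t ↦ t ^ p` makes the extremal density unique (`eq_of_energy_le_of_extremal`), hence `y = ρ_p`; a map
that is eventually in a compact set and has a single cluster point there converges to it.
-/

open scoped BigOperators

variable {V : Type*} [Fintype V] [DecidableEq V]

/-- The ρ-length of a walk: ℓ_ρ(γ) = Σ_{e∈E} N(γ,e) ρ(e), where N(γ,e) is the number
of times the walk γ traverses the edge e. -/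
noncomputable def rhoLength (G : SimpleGraph V) [DecidableRel G.Adj]
    (ρ : G.edgeSet → ℝ) {u v : V} (w : G.Walk u v) : ℝ :=
  ∑ e : G.edgeSet, (w.edges.count ↑e : ℝ) * ρ e

/-- The admissible set A(Γ): densities that are nonnegative and give every walk of Γ
ρ-length at least one. -/
def IsAdmissible (G : SimpleGraph V) [DecidableRel G.Adj]
    (Γ : Set (Σ (u : V) (v : V), G.Walk u v)) (ρ : G.edgeSet → ℝ) : Prop :=
  (∀ e, 0 ≤ ρ e) ∧ ∀ γ ∈ Γ, 1 ≤ rhoLength G ρ γ.2.2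

/-- The p-energy ℰ_p(ρ) = Σ_{e∈E} σ(e) |ρ(e)|^p, for 1 ≤ p < ∞. -/
noncomputable def energy (G : SimpleGraph V) [DecidableRel G.Adj]
    (σ : G.edgeSet → ℝ) (p : ℝ) (ρ : G.edgeSet → ℝ) : ℝ :=
  ∑ e : G.edgeSet, σ e * |ρ e| ^ p

/-- The ∞-energy ℰ_∞(ρ) = max_{e∈E} |ρ(e)|. -/
noncomputable def energyInf (G : SimpleGraph V) [DecidableRel G.Adj]
    (ρ : G.edgeSet → ℝ) : ℝ :=
  ⨆ e : G.edgeSet, |ρ e|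

/-- The p-modulus Mod_p(Γ) = inf_{ρ ∈ A(Γ)} ℰ_p(ρ), for 1 ≤ p < ∞. -/
noncomputable def modulus (G : SimpleGraph V) [DecidableRel G.Adj]
    (σ : G.edgeSet → ℝ) (p : ℝ) (Γ : Set (Σ (u : V) (v : V), G.Walk u v)) : ℝ :=
  sInf (energy G σ p '' {ρ | IsAdmissible G Γ ρ})

/-- The ∞-modulus Mod_∞(Γ) = inf_{ρ ∈ A(Γ)} ℰ_∞(ρ). -/
noncomputable def modulusInf (G : SimpleGraph V) [DecidableRel G.Adj]
    (Γ : Set (Σ (u : V) (v : V), G.Walk u v)) : ℝ :=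
  sInf (energyInf G '' {ρ | IsAdmissible G Γ ρ})

/-- The connecting family Γ(s,t): all walks that start at s and end at t. -/
def connectingFamily (G : SimpleGraph V) (s t : V) :
    Set (Σ (u : V) (v : V), G.Walk u v) :=
  {γ | γ.1 = s ∧ γ.2.1 = t}

/-- The minimum graph length ℓ(Γ) = inf_{γ ∈ Γ} ℓ(γ) (smallest number of hops). -/
noncomputable def minLength (G : SimpleGraph V)
    (Γ : Set (Σ (u : V) (v : V), G.Walk u v)) : ℕ :=
  sInf {n : ℕ | ∃ γ ∈ Γ, γ.2.2.length = n}

/-- |φ(x) - φ(y)|, the potential drop of φ : V → ℝ across an edge, as a function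
on unordered pairs. -/
noncomputable def potDrop (φ : V → ℝ) : Sym2 V → ℝ :=
  Sym2.lift ⟨fun x y => |φ x - φ y|, fun x y => abs_sub_comm (φ x) (φ y)⟩

theorem energy_nonneg (G : SimpleGraph V) [DecidableRel G.Adj]
    (σ : G.edgeSet → ℝ) (hσ : ∀ e, 0 < σ e) (q : ℝ) (ρ : G.edgeSet → ℝ) :
    0 ≤ energy G σ q ρ :=
  Finset.sum_nonneg fun e _ => mul_nonneg (hσ e).le (Real.rpow_nonneg (abs_nonneg _) _)

theorem modulus_le_energy (G : SimpleGraph V) [DecidableRel G.Adj]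
    (σ : G.edgeSet → ℝ) (hσ : ∀ e, 0 < σ e)
    (Γ : Set (Σ (u : V) (v : V), G.Walk u v)) (q : ℝ) {ρ : G.edgeSet → ℝ}
    (h : IsAdmissible G Γ ρ) : modulus G σ q Γ ≤ energy G σ q ρ := by
  refine csInf_le ⟨0, ?_⟩ ⟨ρ, h, rfl⟩
  rintro _ ⟨η, -, rfl⟩
  exact energy_nonneg G σ hσ q η

theorem isClosed_admissible (G : SimpleGraph V) [DecidableRel G.Adj]
    (Γ : Set (Σ (u : V) (v : V), G.Walk u v)) : IsClosed {ρ | IsAdmissible G Γ ρ} := by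
  simp only [IsAdmissible, rhoLength, Set.ofPred_and, Set.ofPred_forall]
  refine IsClosed.inter (isClosed_iInter fun e => ?_)
    (isClosed_iInter fun γ => isClosed_iInter fun _ => ?_)
  · exact isClosed_le continuous_const (continuous_apply e)
  · exact isClosed_le continuous_const (by fun_prop)

theorem IsAdmissible.midpoint {G : SimpleGraph V} [DecidableRel G.Adj]
    {Γ : Set (Σ (u : V) (v : V), G.Walk u v)} {ρ η : G.edgeSet → ℝ}
    (hρ : IsAdmissible G Γ ρ) (hη : IsAdmissible G Γ η) :
    IsAdmissible G Γ (fun e => (1 / 2) * ρ e + (1 / 2) * η e) := by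
  refine ⟨fun e => by linarith [hρ.1 e, hη.1 e], fun γ hγ => ?_⟩
  have h : rhoLength G (fun e => (1 / 2) * ρ e + (1 / 2) * η e) γ.2.2
      = (1 / 2) * rhoLength G ρ γ.2.2 + (1 / 2) * rhoLength G η γ.2.2 := by
    simp only [rhoLength, Finset.mul_sum, ← Finset.sum_add_distrib]
    exact Finset.sum_congr rfl fun e _ => by ring
  linarith [hρ.2 γ hγ, hη.2 γ hγ]

/-- Uniqueness of the extremal density: by strict convexity of the energy, the midpoint of two
distinct minimizers would be admissible with strictly smaller energy. -/
theorem eq_of_energy_le_of_extremal (G : SimpleGraph V) [DecidableRel G.Adj]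
    (σ : G.edgeSet → ℝ) (hσ : ∀ e, 0 < σ e)
    (Γ : Set (Σ (u : V) (v : V), G.Walk u v)) {p : ℝ} (hp : 1 < p) {ρ η : G.edgeSet → ℝ}
    (hρ : IsAdmissible G Γ ρ) (hη : IsAdmissible G Γ η)
    (hE : energy G σ p ρ = modulus G σ p Γ) (hle : energy G σ p η ≤ energy G σ p ρ) :
    η = ρ := by
  by_contra hne
  obtain ⟨a, ha⟩ := Function.ne_iff.1 hne
  have hm := modulus_le_energy G σ hσ Γ p (hρ.midpoint hη)
  have hlt : energy G σ p (fun e => (1 / 2) * ρ e + (1 / 2) * η e)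
      < (1 / 2) * energy G σ p ρ + (1 / 2) * energy G σ p η := by
    simp only [energy, Finset.mul_sum, ← Finset.sum_add_distrib]
    have key (e : G.edgeSet) : |(1 / 2) * ρ e + (1 / 2) * η e| = (1 / 2) * ρ e + (1 / 2) * η e :=
      abs_of_nonneg (by linarith [hρ.1 e, hη.1 e])
    refine Finset.sum_lt_sum (fun e _ => ?_) ⟨a, Finset.mem_univ a, ?_⟩
    · have h := (strictConvexOn_rpow hp).convexOn.2 (Set.mem_Ici.2 (hρ.1 e))
        (Set.mem_Ici.2 (hη.1 e)) (by norm_num : (0 : ℝ) ≤ 1 / 2) (by norm_num : (0 : ℝ) ≤ 1 / 2)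
        (by norm_num)
      simp only [smul_eq_mul] at h
      rw [key, abs_of_nonneg (hρ.1 e), abs_of_nonneg (hη.1 e)]
      linarith [mul_le_mul_of_nonneg_left h (hσ e).le]
    · have h := (strictConvexOn_rpow hp).2 (Set.mem_Ici.2 (hρ.1 a))
        (Set.mem_Ici.2 (hη.1 a)) (Ne.symm ha) (by norm_num : (0 : ℝ) < 1 / 2)
        (by norm_num : (0 : ℝ) < 1 / 2) (by norm_num)
      simp only [smul_eq_mul] at h
      rw [key, abs_of_nonneg (hρ.1 a), abs_of_nonneg (hη.1 a)]
      linarith [mul_lt_mul_of_pos_left h (hσ a)]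
  linarith

/-- Joint continuity of the energy in the exponent and the density, at a positive exponent. -/
theorem tendsto_energy (G : SimpleGraph V) [DecidableRel G.Adj]
    (σ : G.edgeSet → ℝ) {p : ℝ} (hp : 0 < p) {l : Filter ℝ} (hl : Filter.Tendsto id l (nhds p))
    {f : ℝ → G.edgeSet → ℝ} {y : G.edgeSet → ℝ} (hf : Filter.Tendsto f l (nhds y)) :
    Filter.Tendsto (fun q => energy G σ q (f q)) l (nhds (energy G σ p y)) :=
  tendsto_finsetSum _ fun e _ =>
    (((tendsto_pi_nhds.1 hf e).abs).rpow hl (Or.inr hp)).const_mul (σ e)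

theorem le_one_add_rpow {x q : ℝ} (hx : 0 ≤ x) (hq : 1 ≤ q) : x ≤ 1 + x ^ q := by
  rcases le_total x 1 with h | h
  · linarith [Real.rpow_nonneg hx q]
  · linarith [Real.self_le_rpow_of_one_le h hq]

/-- the extremal density ρ_q converges to ρ_p as q → p, for
1 < p < ∞ (coordinatewise, equivalently in any norm on ℝ^E). -/
theorem extremal_density_continuous_in_p
    (G : SimpleGraph V) [DecidableRel G.Adj]
    (σ : G.edgeSet → ℝ) (hσ : ∀ e, 0 < σ e)
    (Γ : Set (Σ (u : V) (v : V), G.Walk u v))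
    (hne : Γ.Nonempty) (hΓ : ∀ γ ∈ Γ, 0 < γ.2.2.length)
    (ρfam : ℝ → (G.edgeSet → ℝ))
    (hfam : ∀ q : ℝ, 1 < q →
      IsAdmissible G Γ (ρfam q) ∧ energy G σ q (ρfam q) = modulus G σ q Γ)
    (p : ℝ) (hp : 1 < p) :
    Filter.Tendsto ρfam (nhdsWithin p (Set.Ioi 1)) (nhds (ρfam p)) := by
  have hp0 : 0 < p := by linarith
  have hid : Filter.Tendsto id (nhdsWithin p (Set.Ioi 1)) (nhds p) :=
    tendsto_nhdsWithin_of_tendsto_nhds Filter.tendsto_id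
  have hcmp : ∀ q, 1 < q → energy G σ q (ρfam q) ≤ energy G σ q (ρfam p) := fun q hq =>
    (hfam q hq).2.trans_le (modulus_le_energy G σ hσ Γ q (hfam p hp).1)
  have hgt : ∀ᶠ q in nhdsWithin p (Set.Ioi 1), 1 < q := self_mem_nhdsWithin
  set M := energy G σ p (ρfam p) + 1 with hM
  have hbd : ∀ᶠ q in nhdsWithin p (Set.Ioi 1), energy G σ q (ρfam p) < M :=
    (tendsto_energy G σ hp0 hid tendsto_const_nhds).eventually_lt_const (by linarith)
  refine (isCompact_Icc (a := (0 : G.edgeSet → ℝ))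
    (b := fun e => 1 + M / σ e)).tendsto_nhds_of_unique_mapClusterPt ?_ ?_
  · filter_upwards [hgt, hbd] with q hq hqM
    have hnn := (hfam q hq).1.1
    refine ⟨hnn, fun e => (le_one_add_rpow (hnn e) hq.le).trans ?_⟩
    have hterm : σ e * |ρfam q e| ^ q ≤ energy G σ q (ρfam q) :=
      Finset.single_le_sum (f := fun e => σ e * |ρfam q e| ^ q)
        (fun i _ => mul_nonneg (hσ i).le (Real.rpow_nonneg (abs_nonneg _) _)) (Finset.mem_univ e)
    rw [abs_of_nonneg (hnn e)] at hterm
    have : ρfam q e ^ q ≤ M / σ e := by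
      rw [le_div_iff₀ (hσ e)]
      linarith [hcmp q hq]
    linarith
  · intro y _ hy
    -- Refine to an ultrafilter along which the family genuinely converges to `y`.
    obtain ⟨U, hU, hUy⟩ := mapClusterPt_iff_ultrafilter.1 hy
    have hUgt : ∀ᶠ q in (U : Filter ℝ), 1 < q := hU hgt
    have hUid : Filter.Tendsto id (U : Filter ℝ) (nhds p) := hid.mono_left hU
    have hadm : IsAdmissible G Γ y :=
      (isClosed_admissible G Γ).mem_of_tendsto hUy (hUgt.mono fun q hq => (hfam q hq).1)
    have hle : energy G σ p y ≤ energy G σ p (ρfam p) :=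
      le_of_tendsto_of_tendsto (tendsto_energy G σ hp0 hUid hUy)
        (tendsto_energy G σ hp0 hUid tendsto_const_nhds) (hUgt.mono hcmp)
    exact eq_of_energy_le_of_extremal G σ hσ Γ hp (hfam p hp).1 hadm (hfam p hp).2 hle
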